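/- There exists a real constant c such that for all n ≥ 1, minS_2(n) ≤ (1/2)·log₂(1 + √2) · n − (1/2)·log₂ n + c. -/

import Mathlib

open List Real

/-- `occ w u` is the number of occurrences of `u` as a subword (subsequence) of `w`,
i.e. the multiplicity of `u` among the `2^|w|` sublists of `w`. -/
def occ {α : Type*} [DecidableEq α] (w u : List α) : ℕ := w.sublists.count u

/-- `maxocc w` is the maximal number of occurrences of any subword of `w`. -/
noncomputable def maxocc {α : Type*} [DecidableEq α] (w : List α) : ℕ :=
  sSup {n : ℕ | ∃ u : List α, occ w u = n}

/-- `minS k n` is the minimal subword entropy `log₂ (maxocc w)` over words `w`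
of length `n` over the alphabet `Fin k`. -/
noncomputable def minS (k n : ℕ) : ℝ :=
  sInf {s : ℝ | ∃ w : List (Fin k), w.length = n ∧ s = Real.logb 2 (maxocc w)}

/-!
The bound is attained by prefixes of the word `00110011⋯`. Split it into blocks `00`, `11`, `00`, …
and, for a fixed subword `u`, let `G u` be the generating function in `X` of the number of
occurrences of `u` in the word with `N` blocks, the first block carrying the first letter of `u`. An
occurrence uses 0, 1 or 2 letters of the first block. With `t = 2 X / (1 - X ^ 2)` this gives

* `G [] = 1 / (1 - X)`,
* `G (a v) = t * G v` if `v` does not start with `a`,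
* `G (a a v) = t * X * G (a v) + t / 2 * G v` if `v` does not start with `a`,
* `G (a a v) = t * X * G (a v) + t / 2 * X * G v` if `v` starts with `a`.

Hence `G u` is a combination of the series `t ^ K * X ^ I / (1 - X)` with `I ≤ K`. At `X = σ⁻¹`,
where `σ = 1 + √2`, one has `t = 1`, and the right-hand sides have total weight at most `1`
because `σ⁻¹ ≤ 1 / 2`; so the total weight of `G u` at `σ⁻¹` is at most `1`. The `N`-th
coefficient of `t ^ K * X ^ I / (1 - X)` is `2 ^ K * C(M, K)` with `M = ⌊(N - I + K) / 2⌋`, and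
since `2 σ⁻¹ + σ⁻² = 1`, multiplying it by `σ ^ (K - 2 M)` gives a point probability of a binomial
law of size `M`, which is `O(1 / √M) = O(1 / √N)`. Therefore every `u` has `O(σ ^ N / √N)`
occurrences, and the word of length `n` has about `n / 2` blocks.
-/

/-! ### Point probabilities of binomial laws -/

section

open Polynomial

theorem centralBinom_sq_mul_le (n : ℕ) : n.centralBinom ^ 2 * (2 * n + 1) ≤ 16 ^ n := by
  induction n with
  | zero => simp
  | succ n ih =>
    refine Nat.le_of_mul_le_mul_left ?_ (show 0 < (n + 1) ^ 2 by positivity)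
    calc (n + 1) ^ 2 * ((n + 1).centralBinom ^ 2 * (2 * (n + 1) + 1))
        = ((n + 1) * (n + 1).centralBinom) ^ 2 * (2 * n + 3) := by ring
      _ = (n.centralBinom ^ 2 * (2 * n + 1)) * (4 * (2 * n + 1) * (2 * n + 3)) := by
          rw [Nat.succ_mul_centralBinom_succ]; ring
      _ ≤ 16 ^ n * (16 * (n + 1) ^ 2) := Nat.mul_le_mul ih (by nlinarith)
      _ = (n + 1) ^ 2 * 16 ^ (n + 1) := by ring

theorem centralBinom_succ_eq_two_mul_choose (n : ℕ) :
    (n + 1).centralBinom = 2 * (2 * n + 1).choose n := by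
  rw [Nat.centralBinom, mul_add_one, Nat.choose_succ_succ, Nat.choose_symm_half]
  ring

theorem choose_sq_mul_succ_le (n k : ℕ) : n.choose k ^ 2 * (n + 1) ≤ 4 ^ n := by
  suffices h : n.choose (n / 2) ^ 2 * (n + 1) ≤ 4 ^ n from
    (Nat.mul_le_mul_right _ (Nat.pow_le_pow_left (Nat.choose_le_middle k n) 2)).trans h
  obtain ⟨m, rfl | rfl⟩ := Nat.even_or_odd' n
  · rw [Nat.mul_div_cancel_left m two_pos]
    have hm := centralBinom_sq_mul_le m
    rwa [Nat.centralBinom, show 16 = 4 ^ 2 by rfl, ← pow_mul] at hm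
  · have hm := centralBinom_sq_mul_le (m + 1)
    rw [centralBinom_succ_eq_two_mul_choose] at hm
    rw [show (2 * m + 1) / 2 = m by lia]
    refine Nat.le_of_mul_le_mul_left ?_ four_pos
    calc 4 * ((2 * m + 1).choose m ^ 2 * (2 * m + 1 + 1))
        ≤ 4 * ((2 * m + 1).choose m ^ 2 * (2 * (m + 1) + 1)) := by gcongr; lia
      _ = (2 * (2 * m + 1).choose m) ^ 2 * (2 * (m + 1) + 1) := by ring
      _ ≤ 16 ^ (m + 1) := hm
      _ = 4 * 4 ^ (2 * m + 1) := by rw [show 16 = 4 ^ 2 by rfl, ← pow_mul]; ring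

theorem choose_le_two_pow_div_sqrt (n k : ℕ) : (n.choose k : ℝ) ≤ 2 ^ n / √(n + 1) := by
  rw [le_div_iff₀ (by positivity)]
  refine le_of_sq_le_sq ?_ (by positivity)
  rw [mul_pow, Real.sq_sqrt (by positivity), pow_right_comm]
  norm_num
  exact_mod_cast choose_sq_mul_succ_le n k

theorem sum_pow_mul_choose_div_succ {K : Type*} [Field K] [CharZero K] (a b : K) (n : ℕ) :
    (∑ j ∈ Finset.range (n + 1), a ^ j * b ^ (n - j) * n.choose j / (j + 1)) * (a * (n + 1)) =
      (a + b) ^ (n + 1) - b ^ (n + 1) := by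
  rw [add_pow, Finset.sum_range_succ' _ (n + 1), Finset.sum_mul]
  simp only [pow_zero, Nat.sub_zero, Nat.choose_zero_right, Nat.cast_one, one_mul, mul_one,
    add_sub_cancel_right, Nat.add_sub_add_right]
  refine Finset.sum_congr rfl fun j _ => ?_
  have hchoose : ((n : K) + 1) * n.choose j = (n + 1).choose (j + 1) * (j + 1) := by
    exact_mod_cast Nat.add_one_mul_choose_eq n j
  have hj : (j : K) + 1 ≠ 0 := Nat.cast_add_one_ne_zero j
  field_simp
  linear_combination a * a ^ j * b ^ (n - j) * hchoose

theorem coeff_C_mul_X_add_C_pow {R : Type*} [CommSemiring R] (p q : R) (n k : ℕ) :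
    ((C p * X + C q) ^ n).coeff k = n.choose k * p ^ k * q ^ (n - k) := by
  have hterm (m : ℕ) : ((C p * X) ^ m * C q ^ (n - m) * (n.choose m : R[X])) =
      C (n.choose m * p ^ m * q ^ (n - m)) * X ^ m := by
    simp only [C_mul, C_pow, mul_pow, map_natCast]; ring
  simp only [add_pow, finsetSum_coeff, hterm, coeff_C_mul_X_pow, Finset.sum_ite_eq,
    Finset.mem_range]
  split_ifs with hk
  · rfl
  · simp [Nat.choose_eq_zero_of_lt (show n < k by lia)]

theorem coeff_X_pow_mul_X_add_one_pow_le (i j k : ℕ) :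
    (X ^ i * (X + 1) ^ j : ℝ[X]).coeff k ≤ 2 ^ j / √(j + 1) := by
  rw [coeff_X_pow_mul']
  split_ifs
  · simpa only [coeff_X_add_one_pow] using choose_le_two_pow_div_sqrt j (k - i)
  · positivity

/-- A coin of bias `p = 1 - q` is a fair coin with probability `2 q` and constant otherwise, so the
binomial law is a mixture of translates of fair ones. -/
theorem choose_mul_pow_mul_pow_le_sum {p q : ℝ} (hq : 0 ≤ q) (hqp : q ≤ p) (n k : ℕ) :
    n.choose k * p ^ k * q ^ (n - k) ≤ ∑ j ∈ Finset.range (n + 1),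
      (2 * q) ^ j * (p - q) ^ (n - j) * n.choose j * (1 / √(j + 1)) := by
  have hmix : (C p * X + C q) ^ n = (C q * (X + 1) + C (p - q) * X) ^ n := by
    rw [C_sub]; ring
  have hterm (j : ℕ) : (C q * (X + 1)) ^ j * (C (p - q) * X) ^ (n - j) * (n.choose j : ℝ[X]) =
      C (q ^ j * (p - q) ^ (n - j) * n.choose j) * (X ^ (n - j) * (X + 1) ^ j) := by
    simp only [C_mul, C_pow, mul_pow, map_natCast]; ring
  rw [← coeff_C_mul_X_add_C_pow, hmix, add_pow, finsetSum_coeff]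
  refine Finset.sum_le_sum fun j _ => ?_
  have : 0 ≤ p - q := sub_nonneg.2 hqp
  calc ((C q * (X + 1)) ^ j * (C (p - q) * X) ^ (n - j) * (n.choose j : ℝ[X])).coeff k
      = q ^ j * (p - q) ^ (n - j) * n.choose j * (X ^ (n - j) * (X + 1) ^ j : ℝ[X]).coeff k := by
        rw [hterm, coeff_C_mul]
    _ ≤ q ^ j * (p - q) ^ (n - j) * n.choose j * (2 ^ j / √(j + 1)) := by
        gcongr; exact coeff_X_pow_mul_X_add_one_pow_le _ _ _
    _ = (2 * q) ^ j * (p - q) ^ (n - j) * n.choose j * (1 / √(j + 1)) := by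
        rw [mul_pow]; ring

theorem choose_mul_pow_mul_pow_le_inv_sqrt {p q : ℝ} (hq : 0 < q) (hqp : q ≤ p) (hpq : p + q = 1)
    (n k : ℕ) : n.choose k * p ^ k * q ^ (n - k) ≤ 1 / √(2 * q * (n + 1)) := by
  have : 0 ≤ p - q := sub_nonneg.2 hqp
  have hsum : 2 * q + (p - q) = 1 := by linarith
  set w : ℕ → ℝ := fun j => (2 * q) ^ j * (p - q) ^ (n - j) * n.choose j
  have hw_nonneg : ∀ j ∈ Finset.range (n + 1), 0 ≤ w j := fun j _ => by positivity
  have hw_sum : ∑ j ∈ Finset.range (n + 1), w j = 1 := by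
    rw [← add_pow, hsum, one_pow]
  have hw_div : ∑ j ∈ Finset.range (n + 1), w j / (j + 1) ≤ 1 / (2 * q * (n + 1)) := by
    rw [le_div_iff₀ (by positivity), sum_pow_mul_choose_div_succ, hsum, one_pow]
    exact sub_le_self _ (by positivity)
  refine (choose_mul_pow_mul_pow_le_sum hq.le hqp n k).trans ?_
  rw [← Real.sqrt_one, ← Real.sqrt_div zero_le_one, Real.sqrt_one]
  refine Real.le_sqrt_of_sq_le ?_
  calc (∑ j ∈ Finset.range (n + 1), w j * (1 / √(j + 1))) ^ 2
      ≤ ∑ j ∈ Finset.range (n + 1), w j * (1 / √(j + 1)) ^ 2 :=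
        Real.pow_arith_mean_le_arith_mean_pow _ w _ hw_nonneg hw_sum (fun j _ => by positivity) 2
    _ = ∑ j ∈ Finset.range (n + 1), w j / (j + 1) :=
        Finset.sum_congr rfl fun j _ => by
          rw [div_pow, Real.sq_sqrt (by positivity), one_pow, mul_one_div]
    _ ≤ 1 / (2 * q * (n + 1)) := hw_div

end

/-! ### Occurrences of subwords -/

section

variable {α : Type*} [DecidableEq α]

theorem occ_eq_count_sublists' (w u : List α) : occ w u = w.sublists'.count u :=
  (List.sublists_perm_sublists' w).count_eq u

theorem occ_le_occ_of_sublist {w₁ w₂ : List α} (h : w₁ <+ w₂) (u : List α) :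
    occ w₁ u ≤ occ w₂ u := by
  simpa only [occ_eq_count_sublists'] using h.sublists'.count_le u

theorem occ_nil_cons (a : α) (u : List α) : occ [] (a :: u) = 0 := by
  simp [occ]

theorem occ_cons_cons_self (a : α) (w u : List α) :
    occ (a :: w) (a :: u) = occ w (a :: u) + occ w u := by
  simp only [occ_eq_count_sublists', List.sublists'_cons, List.count_append,
    List.count_map_of_injective _ _ List.cons_injective]

theorem occ_cons_of_head?_ne {a : α} {u : List α} (hu : u.head? ≠ some a) (w : List α) :
    occ (a :: w) u = occ w u := by
  have hmap : (w.sublists'.map (List.cons a)).count u = 0 := by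
    rw [List.count_eq_zero, List.mem_map]
    rintro ⟨v, -, rfl⟩
    exact hu rfl
  simp only [occ_eq_count_sublists', List.sublists'_cons, List.count_append, hmap, add_zero]

theorem occ_nil_right (w : List α) : occ w [] = 1 := by
  induction w with
  | nil => rfl
  | cons a w ih => rw [occ_cons_of_head?_ne (by simp), ih]

theorem bddAbove_occ (w : List α) : BddAbove {n : ℕ | ∃ u : List α, occ w u = n} := by
  refine ⟨2 ^ w.length, ?_⟩
  rintro _ ⟨u, rfl⟩
  exact List.count_le_length.trans_eq (List.length_sublists w)

theorem one_le_maxocc (w : List α) : 1 ≤ maxocc w :=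
  le_csSup (bddAbove_occ w) ⟨[], occ_nil_right w⟩

theorem exists_occ_eq_maxocc (w : List α) : ∃ u, occ w u = maxocc w :=
  Nat.sSup_mem (s := {n | ∃ u, occ w u = n}) ⟨occ w [], [], rfl⟩ (bddAbove_occ w)

theorem logb_two_maxocc_nonneg (w : List α) : 0 ≤ Real.logb 2 (maxocc w) :=
  Real.logb_nonneg one_lt_two (by exact_mod_cast one_le_maxocc w)

theorem minS_le_logb_of_forall_occ_le {k : ℕ} {w : List (Fin k)} {B : ℝ}
    (hB : ∀ u, (occ w u : ℝ) ≤ B) : minS k w.length ≤ Real.logb 2 B := by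
  obtain ⟨u, hu⟩ := exists_occ_eq_maxocc w
  have hpos : (0 : ℝ) < maxocc w := by exact_mod_cast one_le_maxocc w
  calc minS k w.length ≤ Real.logb 2 (maxocc w) := by
        refine csInf_le ⟨0, ?_⟩ ⟨w, rfl, rfl⟩
        rintro _ ⟨w', -, rfl⟩
        exact logb_two_maxocc_nonneg w'
    _ ≤ Real.logb 2 B := Real.logb_le_logb_of_le one_lt_two hpos (hu ▸ hB u)

end

/-! ### Block words and their generating functions -/

section

variable {α : Type*}

/-- The word `a a b b a a ⋯` made of `N` blocks of two equal letters. -/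
def blockWord (a b : α) : ℕ → List α
  | 0 => []
  | N + 1 => a :: a :: blockWord b a N

theorem length_blockWord (a b : α) (N : ℕ) : (blockWord a b N).length = 2 * N := by
  induction N generalizing a b with
  | zero => rfl
  | succ N ih => simp only [blockWord, List.length_cons, ih]; ring

theorem blockWord_sublist_succ (a b : α) (N : ℕ) : blockWord a b N <+ blockWord a b (N + 1) := by
  induction N generalizing a b with
  | zero => exact List.nil_sublist _
  | succ N ih => exact ((ih b a).cons_cons a).cons_cons a

theorem blockWord_sublist_swap_succ (a b : α) (N : ℕ) :
    blockWord a b N <+ blockWord b a (N + 1) :=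
  ((List.Sublist.refl _).cons b).cons b

end

section

open PowerSeries

/-- The series `t = 2 X / (1 - X ^ 2)`, by which prepending a new run of length one to a subword
multiplies the generating function of its occurrences in block words. -/
noncomputable def letterSeries : ℝ⟦X⟧ := 2 * X * (1 - X ^ 2)⁻¹

theorem eq_letterSeries_mul_of_eq {f g : ℝ⟦X⟧} (h : f = X ^ 2 * f + 2 * X * g) :
    f = letterSeries * g := by
  have hconst : constantCoeff (1 - X ^ 2 : ℝ⟦X⟧) ≠ 0 := by simp
  rw [letterSeries, mul_right_comm, PowerSeries.eq_mul_inv_iff_mul_eq hconst]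
  linear_combination h

theorem letterSeries_pow_mul_mk_one (K : ℕ) :
    letterSeries ^ K * PowerSeries.mk 1 =
      PowerSeries.mk fun n => (2 : ℝ) ^ K * ((n + K) / 2).choose K := by
  induction K with
  | zero => ext n; simp
  | succ K ih =>
    rw [pow_succ', mul_assoc, ih]
    refine (eq_letterSeries_mul_of_eq ?_).symm
    have htwo : (2 : ℝ⟦X⟧) = C 2 := (map_ofNat C 2).symm
    ext n
    rw [htwo, map_add, mul_assoc (C 2), coeff_C_mul]
    match n with
    | 0 => simp [Nat.choose_eq_zero_of_lt (show (K + 1) / 2 < K + 1 by lia)]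
    | 1 =>
      cases K with
      | zero => simp [coeff_X_pow_mul', coeff_succ_X_mul]
      | succ K =>
        simp [coeff_X_pow_mul', coeff_succ_X_mul,
          Nat.choose_eq_zero_of_lt (show (K + 1) / 2 < K + 1 by lia),
          Nat.choose_eq_zero_of_lt (show (1 + (K + 1 + 1)) / 2 < K + 1 + 1 by lia)]
    | n + 2 =>
      rw [coeff_X_pow_mul, coeff_succ_X_mul]
      simp only [coeff_mk]
      rw [show (n + 2 + (K + 1)) / 2 = (n + K + 1) / 2 + 1 by lia, Nat.choose_succ_succ,
        show (n + (K + 1)) / 2 = (n + K + 1) / 2 by lia,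
        show (n + 1 + K) / 2 = (n + K + 1) / 2 by lia]
      push_cast
      ring

variable {α : Type*} [DecidableEq α]

/-- The generating function `∑ N, occ (blockWord a b N) u * X ^ N`, indexed by the number of
blocks. -/
noncomputable def occSeries (a b : α) (u : List α) : ℝ⟦X⟧ :=
  PowerSeries.mk fun N => (occ (blockWord a b N) u : ℝ)

theorem occSeries_nil (a b : α) : occSeries a b [] = PowerSeries.mk 1 := by
  ext N
  simp [occSeries, occ_nil_right]

theorem occSeries_eq_X_mul {a c : α} (hc : c ≠ a) (b : α) (v : List α) :
    occSeries a b (c :: v) = X * occSeries b a (c :: v) := by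
  have hhead : (c :: v).head? ≠ some a := by simpa using hc
  ext N
  cases N with
  | zero => simp [occSeries, blockWord, occ_nil_cons]
  | succ N => simp [occSeries, coeff_succ_X_mul, blockWord, occ_cons_of_head?_ne hhead]

theorem occSeries_cons {a : α} {v : List α} (hv : v.head? ≠ some a) (b : α) :
    occSeries a b (a :: v) = X * (occSeries b a (a :: v) + 2 * occSeries b a v) := by
  ext N
  cases N with
  | zero => simp [occSeries, blockWord, occ_nil_cons]
  | succ N =>
    simp [occSeries, coeff_succ_X_mul, blockWord, occ_cons_cons_self, occ_cons_of_head?_ne hv,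
      two_mul, add_assoc]

theorem occSeries_cons_cons (a b : α) (v : List α) :
    occSeries a b (a :: a :: v) =
      X * (occSeries b a (a :: a :: v) + 2 * occSeries b a (a :: v) + occSeries b a v) := by
  ext N
  cases N with
  | zero => simp [occSeries, blockWord, occ_nil_cons]
  | succ N =>
    simp [occSeries, coeff_succ_X_mul, blockWord, occ_cons_cons_self, two_mul]
    ring

variable {a b : α}

theorem occSeries_cons_eq_letterSeries_mul (hab : a ≠ b) {v : List α} (hv : v.head? ≠ some a) :
    occSeries a b (a :: v) = letterSeries * occSeries b a v := by
  apply eq_letterSeries_mul_of_eq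
  linear_combination occSeries_cons hv b + X * occSeries_eq_X_mul hab a v

theorem occSeries_cons_cons_eq_letterSeries_mul (hab : a ≠ b) (v : List α) :
    occSeries a b (a :: a :: v) =
      letterSeries * (X * occSeries a b (a :: v)) +
        (1 / 2 : ℝ) • (letterSeries * occSeries b a v) := by
  rw [← mul_smul_comm, ← mul_add]
  apply eq_letterSeries_mul_of_eq
  have hhalf : (2 : ℝ⟦X⟧) * ((1 / 2 : ℝ) • occSeries b a v) = occSeries b a v := by
    rw [mul_smul_comm, two_mul, ← two_smul ℝ, smul_smul]
    norm_num
  linear_combination occSeries_cons_cons a b v + X * occSeries_eq_X_mul hab a (a :: v) +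
    2 * X * occSeries_eq_X_mul hab a v - X * hhalf

theorem occSeries_cons_eq_zero {c : α} (hca : c ≠ a) (hcb : c ≠ b) (v : List α) :
    occSeries a b (c :: v) = 0 := by
  rw [eq_letterSeries_mul_of_eq (f := occSeries a b (c :: v)) (g := 0), mul_zero]
  linear_combination occSeries_eq_X_mul hca b v + X * occSeries_eq_X_mul hcb a v

end

/-! ### The silver ratio and the envelope -/

/-- The silver ratio `σ = 1 + √2`, the exponential growth rate of the occurrence counts per block;
`letterSeries` takes the value `1` at `σ⁻¹`. -/
noncomputable def silverRatio : ℝ := 1 + √2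

local notation "σ" => silverRatio

theorem two_le_silverRatio : 2 ≤ σ := by
  have : 1 ≤ √2 := Real.one_le_sqrt.2 one_le_two
  unfold silverRatio
  linarith

theorem silverRatio_pos : 0 < σ := two_pos.trans_le two_le_silverRatio

theorem one_le_silverRatio : 1 ≤ σ := one_le_two.trans two_le_silverRatio

theorem inv_silverRatio_le_half : σ⁻¹ ≤ 1 / 2 := by
  rw [one_div]
  exact inv_anti₀ two_pos two_le_silverRatio

theorem two_mul_inv_silverRatio_add_sq : 2 * σ⁻¹ + σ⁻¹ ^ 2 = 1 := by
  have hsq : σ ^ 2 = 2 * σ + 1 := by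
    unfold silverRatio
    linear_combination Real.sq_sqrt zero_le_two
  have := silverRatio_pos.ne'
  field_simp
  exact hsq.symm

/-- Apart from the factor `σ ^ (2 * M - K)`, the left-hand side is a point probability of the
binomial law with parameters `2 σ⁻¹ + σ⁻² = 1`. -/
theorem two_pow_mul_choose_le (M K : ℕ) :
    2 ^ K * (M.choose K : ℝ) ≤ σ ^ (2 * M - K) * (σ / √(2 * (M + 1))) := by
  have hσ := silverRatio_pos
  obtain hMK | hKM := lt_or_ge M K
  · rw [Nat.choose_eq_zero_of_lt hMK, Nat.cast_zero, mul_zero]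
    positivity
  · obtain ⟨j, rfl⟩ := Nat.exists_eq_add_of_le hKM
    have hle : σ⁻¹ ^ 2 ≤ 2 * σ⁻¹ := by
      have := inv_silverRatio_le_half
      have : 0 < σ⁻¹ := inv_pos.2 hσ
      nlinarith
    have hpoint := choose_mul_pow_mul_pow_le_inv_sqrt (by positivity) hle
      two_mul_inv_silverRatio_add_sq (K + j) K
    have hsqrt : 1 / √(2 * σ⁻¹ ^ 2 * ((K + j : ℕ) + 1)) = σ / √(2 * ((K + j : ℕ) + 1)) := by
      rw [mul_right_comm, Real.sqrt_mul (by positivity), Real.sqrt_sq (by positivity)]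
      field_simp
    rw [show 2 * (K + j) - K = K + 2 * j by lia, ← hsqrt]
    calc 2 ^ K * ((K + j).choose K : ℝ)
        = σ ^ (K + 2 * j) * ((K + j).choose K * (2 * σ⁻¹) ^ K * (σ⁻¹ ^ 2) ^ (K + j - K)) := by
          rw [Nat.add_sub_cancel_left, mul_pow 2, ← pow_mul, mul_assoc, mul_assoc, ← pow_add,
            mul_left_comm, mul_left_comm (σ ^ _), ← mul_pow, mul_inv_cancel₀ hσ.ne']
          ring
      _ ≤ σ ^ (K + 2 * j) * (1 / √(2 * σ⁻¹ ^ 2 * ((K + j : ℕ) + 1))) :=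
          mul_le_mul_of_nonneg_left hpoint (by positivity)

/-- The bound `σ ^ (N + 1) / √(N + 1)` for the number of occurrences in a word of `N` blocks. -/
noncomputable def envelope (N : ℕ) : ℝ := σ ^ (N + 1) / √(N + 1)

theorem envelope_nonneg (N : ℕ) : 0 ≤ envelope N := by
  have := silverRatio_pos
  unfold envelope
  positivity

theorem logb_two_envelope (N : ℕ) :
    Real.logb 2 (envelope N) = (N + 1) * Real.logb 2 σ - 1 / 2 * Real.logb 2 (N + 1) := by
  have := silverRatio_pos
  rw [envelope, Real.logb_div (by positivity) (by positivity), Real.logb_pow, Real.sqrt_eq_rpow,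
    Real.logb_rpow_eq_mul_logb_of_pos (by positivity), Nat.cast_add_one]

/-! ### Weights -/

section

open PowerSeries

/-- `HasWeightLE f r` says that the coefficients of `f` are at most `r` times the envelope, and that
they remain so after multiplication by any `letterSeries ^ K * X ^ I` with `I ≤ K`, with a gain of
`σ⁻¹` for each factor `X`. Thus `r` stands for an upper bound on the weight obtained by evaluating
the cofactor of `1 / (1 - X)` in `f` at `X = σ⁻¹`, where `letterSeries` is `1`. -/
def HasWeightLE (f : ℝ⟦X⟧) (r : ℝ) : Prop :=
  ∀ K I N : ℕ, I ≤ K → coeff N (letterSeries ^ K * X ^ I * f) ≤ r * (σ⁻¹ ^ I * envelope N)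

/-- As `I ≤ K`, the size `M` of the binomial law is at least about `N / 2`. -/
theorem hasWeightLE_mk_one : HasWeightLE (PowerSeries.mk 1) 1 := by
  intro K I N hIK
  have hσ := silverRatio_pos
  rw [mul_comm (letterSeries ^ K), mul_assoc, coeff_X_pow_mul', letterSeries_pow_mul_mk_one,
    coeff_mk, one_mul]
  split_ifs with hIN
  · obtain ⟨n, rfl⟩ := Nat.exists_eq_add_of_le hIN
    rw [Nat.add_sub_cancel_left]
    set M := (n + K) / 2
    have hexp : 2 * M - K ≤ n := by lia
    have hsize : ((I + n : ℕ) + 1 : ℝ) ≤ 2 * (M + 1) := by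
      exact_mod_cast (show I + n + 1 ≤ 2 * (M + 1) by lia)
    calc 2 ^ K * (M.choose K : ℝ)
        ≤ σ ^ (2 * M - K) * (σ / √(2 * (M + 1))) := two_pow_mul_choose_le M K
      _ ≤ σ ^ n * (σ / √((I + n : ℕ) + 1)) := by
          gcongr
          exact one_le_silverRatio
      _ = σ⁻¹ ^ I * envelope (I + n) := by
          rw [envelope, add_assoc I n, pow_add, mul_div_assoc, ← mul_assoc, ← mul_pow,
            inv_mul_cancel₀ hσ.ne', one_pow, one_mul, pow_succ, mul_div_assoc]
  · have := envelope_nonneg N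
    positivity

namespace HasWeightLE

variable {f g : ℝ⟦X⟧} {r s : ℝ}

theorem zero : HasWeightLE 0 0 := fun K I N _ => by simp

theorem mono (hf : HasWeightLE f r) (hrs : r ≤ s) : HasWeightLE f s := fun K I N hIK =>
  (hf K I N hIK).trans <| mul_le_mul_of_nonneg_right hrs <|
    mul_nonneg (pow_nonneg (inv_nonneg.2 silverRatio_pos.le) I) (envelope_nonneg N)

theorem add (hf : HasWeightLE f r) (hg : HasWeightLE g s) : HasWeightLE (f + g) (r + s) :=
  fun K I N hIK => by
    rw [mul_add, map_add, add_mul]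
    exact add_le_add (hf K I N hIK) (hg K I N hIK)

theorem smul (hf : HasWeightLE f r) (hs : 0 ≤ s) : HasWeightLE (s • f) (s * r) :=
  fun K I N hIK => by
    rw [mul_smul_comm, coeff_smul, smul_eq_mul, mul_assoc s]
    exact mul_le_mul_of_nonneg_left (hf K I N hIK) hs

theorem letterSeries_mul (hf : HasWeightLE f r) : HasWeightLE (letterSeries * f) r :=
  fun K I N hIK => by
    rw [show letterSeries ^ K * X ^ I * (letterSeries * f) =
      letterSeries ^ (K + 1) * X ^ I * f by ring]
    exact hf (K + 1) I N (by lia)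

theorem letterSeries_mul_X_mul (hf : HasWeightLE f r) :
    HasWeightLE (letterSeries * (X * f)) (r * σ⁻¹) := fun K I N hIK => by
  rw [show letterSeries ^ K * X ^ I * (letterSeries * (X * f)) =
      letterSeries ^ (K + 1) * X ^ (I + 1) * f by ring,
    show r * σ⁻¹ * (σ⁻¹ ^ I * envelope N) = r * (σ⁻¹ ^ (I + 1) * envelope N) by ring]
  exact hf (K + 1) (I + 1) N (by lia)

end HasWeightLE

variable {α : Type*} [DecidableEq α]

theorem hasWeightLE_letterSeries_mul_occSeries {a b : α} (hab : a ≠ b) {u : List α}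
    (hhead : u.head? ≠ some b → HasWeightLE (occSeries a b u) 1)
    (hhead_swap : u.head? ≠ some a → HasWeightLE (occSeries b a u) 1) :
    HasWeightLE (letterSeries * occSeries a b u) 1 := by
  by_cases hu : u.head? = some b
  · obtain ⟨v, rfl⟩ := List.head?_eq_some_iff.1 hu
    rw [occSeries_eq_X_mul hab.symm]
    have hswap := hhead_swap (by simpa using hab.symm)
    exact hswap.letterSeries_mul_X_mul.mono (by linarith [inv_silverRatio_le_half])
  · exact (hhead hu).letterSeries_mul

theorem hasWeightLE_occSeries {a b : α} (hab : a ≠ b) (u : List α) (hu : u.head? ≠ some b) :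
    HasWeightLE (occSeries a b u) 1 := by
  match u with
  | [] => exact occSeries_nil a b ▸ hasWeightLE_mk_one
  | c :: v =>
    have hcb : c ≠ b := by simpa using hu
    obtain rfl | hac := eq_or_ne a c
    · by_cases hv : v.head? = some a
      · obtain ⟨v, rfl⟩ := List.head?_eq_some_iff.1 hv
        rw [occSeries_cons_cons_eq_letterSeries_mul hab]
        have hone := (hasWeightLE_occSeries hab (a :: v) hu).letterSeries_mul_X_mul
        have htwo := (hasWeightLE_letterSeries_mul_occSeries hab.symm
          (hasWeightLE_occSeries hab.symm v) (hasWeightLE_occSeries hab v)).smul one_half_pos.le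
        exact (hone.add htwo).mono (by linarith [inv_silverRatio_le_half])
      · rw [occSeries_cons_eq_letterSeries_mul hab hv]
        exact (hasWeightLE_occSeries hab.symm v hv).letterSeries_mul
    · exact occSeries_cons_eq_zero hac.symm hcb v ▸ HasWeightLE.zero.mono zero_le_one
termination_by u.length

theorem occ_blockWord_le_envelope {a b : α} (hab : a ≠ b) {u : List α}
    (hu : u.head? ≠ some b) (N : ℕ) : occ (blockWord a b N) u ≤ envelope N := by
  simpa [occSeries] using hasWeightLE_occSeries hab u hu 0 0 N le_rfl

theorem occ_blockWord_le_envelope_succ {a b : α} (hab : a ≠ b) (N : ℕ) (u : List α) :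
    occ (blockWord a b N) u ≤ envelope (N + 1) := by
  by_cases hu : u.head? = some b
  · have hhead : u.head? ≠ some a := by simpa [hu] using hab.symm
    refine le_trans ?_ (occ_blockWord_le_envelope hab.symm hhead (N + 1))
    exact_mod_cast occ_le_occ_of_sublist (blockWord_sublist_swap_succ a b N) u
  · refine le_trans ?_ (occ_blockWord_le_envelope hab hu (N + 1))
    exact_mod_cast occ_le_occ_of_sublist (blockWord_sublist_succ a b N) u

theorem exists_word_forall_occ_le_envelope {a b : α} (hab : a ≠ b) (n : ℕ) :
    ∃ w : List α, w.length = n ∧ ∀ u, (occ w u : ℝ) ≤ envelope ((n + 1) / 2 + 1) := by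
  refine ⟨(blockWord a b ((n + 1) / 2)).take n, ?_, fun u => ?_⟩
  · rw [List.length_take, length_blockWord]
    lia
  · refine le_trans ?_ (occ_blockWord_le_envelope_succ hab ((n + 1) / 2) u)
    exact_mod_cast occ_le_occ_of_sublist (List.take_sublist n _) u

end

theorem logb_two_envelope_le {n N : ℕ} (hn : 1 ≤ n) (hnN : n ≤ 2 * N) (hNn : 2 * N ≤ n + 3) :
    Real.logb 2 (envelope N) ≤ 1 / 2 * Real.logb 2 (1 + √2) * n - 1 / 2 * Real.logb 2 n +
      (5 / 2 * Real.logb 2 (1 + √2) + 1 / 2) := by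
  have hlog_nonneg : 0 ≤ Real.logb 2 (1 + √2) :=
    Real.logb_nonneg one_lt_two one_le_silverRatio
  have hNn' : (N : ℝ) + 1 ≤ n / 2 + 5 / 2 := by
    have : (2 * N : ℝ) ≤ n + 3 := by exact_mod_cast hNn
    linarith
  have hn_pos : (0 : ℝ) < n := by exact_mod_cast hn
  have hlog : Real.logb 2 n ≤ 1 + Real.logb 2 (N + 1) := by
    have hle : (n : ℝ) ≤ 2 * (N + 1) := by exact_mod_cast hnN.trans (by lia)
    calc Real.logb 2 n ≤ Real.logb 2 (2 * (N + 1)) := Real.logb_le_logb_of_le one_lt_two hn_pos hle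
      _ = 1 + Real.logb 2 (N + 1) := by
          rw [Real.logb_mul two_ne_zero (by positivity), Real.logb_self_eq_one one_lt_two]
  calc Real.logb 2 (envelope N)
      = (N + 1) * Real.logb 2 (1 + √2) - 1 / 2 * Real.logb 2 (N + 1) := logb_two_envelope N
    _ ≤ (n / 2 + 5 / 2) * Real.logb 2 (1 + √2) - 1 / 2 * (Real.logb 2 n - 1) := by
        gcongr
        linarith
    _ = _ := by ring

theorem stmt_10_general :
    ∃ c : ℝ, ∀ k n : ℕ, 2 ≤ k → 1 ≤ n →
      minS k n ≤ (1 / 2) * Real.logb 2 (1 + Real.sqrt 2) * n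
        - (1 / 2) * Real.logb 2 n + c := by
  refine ⟨5 / 2 * Real.logb 2 (1 + √2) + 1 / 2, fun k n hk hn => ?_⟩
  have hletters : (⟨0, by lia⟩ : Fin k) ≠ ⟨1, by lia⟩ := by simp
  obtain ⟨w, rfl, hw⟩ := exists_word_forall_occ_le_envelope hletters n
  exact (minS_le_logb_of_forall_occ_le hw).trans (logb_two_envelope_le hn (by lia) (by lia))

theorem stmt_10 :
    ∃ c : ℝ, ∀ n : ℕ, 1 ≤ n →
      minS 2 n ≤ (1 / 2) * Real.logb 2 (1 + Real.sqrt 2) * n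
        - (1 / 2) * Real.logb 2 n + c := by
  obtain ⟨c, hc⟩ := stmt_10_general
  exact ⟨c, fun n hn => hc 2 n le_rfl hn⟩
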